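/- arXiv:1912.04335 — 4 statements merged into one kernel-verified Lean document; each statement's English description precedes it below -/
import Mathlib

section
/- Let (x̂, π̂) be dual-feasible, let (x, z) ∈ ℝ^n × ℝ^m satisfy Ax + z ≥ b and z ≥ 0, and let φ > ‖π̂‖∞. Then ‖z‖∞ ≤ (f(x) + φ·1ᵀz − ψ(x̂, π̂)) / (φ − ‖π̂‖∞). (Lemma 3.2.) -/
open Matrix Filter

/-- The quadratic objective f(x) = (1/2) xᵀHx + cᵀx. -/
noncomputable def qObj {n : ℕ} (H : Matrix (Fin n) (Fin n) ℝ) (c : Fin n → ℝ)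
    (x : Fin n → ℝ) : ℝ :=
  (1 / 2) * (x ⬝ᵥ H.mulVec x) + c ⬝ᵥ x

/-- The dual objective ψ(x̂, π̂) = −(1/2)x̂ᵀHx̂ + bᵀπ̂. -/
noncomputable def dObj {n m : ℕ} (H : Matrix (Fin n) (Fin n) ℝ) (b : Fin m → ℝ)
    (xhat : Fin n → ℝ) (pihat : Fin m → ℝ) : ℝ :=
  -(1 / 2) * (xhat ⬝ᵥ H.mulVec xhat) + b ⬝ᵥ pihat

/-!
For dual-feasible `(x̂, π̂)` the duality gap at an arbitrary `x` is exactly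
`f(x) - ψ(x̂, π̂) = (1/2) (x - x̂)ᵀ H (x - x̂) + π̂ᵀ (A x - b)`.
The first term is nonnegative, and `A x - b ≥ -z` makes the second at least `-π̂ᵀ z`. By Hölder's
inequality `π̂ᵀ z ≤ ‖π̂‖∞ ‖z‖₁`, so the penalised gap `f(x) + φ 1ᵀz - ψ(x̂, π̂)` is at least
`(φ - ‖π̂‖∞) ‖z‖₁`, and `‖z‖₁ ≥ ‖z‖∞`.
-/

theorem pi_norm_le_sum_norm {ι : Type*} [Fintype ι] {E : ι → Type*}
    [∀ i, SeminormedAddGroup (E i)] (z : ∀ i, E i) : ‖z‖ ≤ ∑ i, ‖z i‖ :=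
  (pi_norm_le_iff_of_nonneg (Finset.sum_nonneg fun _ _ ↦ norm_nonneg _)).2 fun i ↦
    Finset.single_le_sum (f := fun i ↦ ‖z i‖) (fun _ _ ↦ norm_nonneg _) (Finset.mem_univ i)

theorem norm_dotProduct_le_norm_mul_sum_norm {ι R : Type*} [Fintype ι]
    [NonUnitalSeminormedRing R] (u z : ι → R) : ‖u ⬝ᵥ z‖ ≤ ‖u‖ * ∑ i, ‖z i‖ :=
  calc ‖u ⬝ᵥ z‖ ≤ ∑ i, ‖u i * z i‖ := norm_sum_le _ _
    _ ≤ ∑ i, ‖u‖ * ‖z i‖ := by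
      gcongr with i
      exact (norm_mul_le _ _).trans (by gcongr; exact norm_le_pi_norm u i)
    _ = ‖u‖ * ∑ i, ‖z i‖ := (Finset.mul_sum ..).symm

section Symmetric

variable {ι R : Type*} [Fintype ι] {H : Matrix ι ι R}

theorem dotProduct_mulVec_comm_of_isSymm [NonUnitalCommSemiring R] (hH : H.IsSymm) (x y : ι → R) :
    x ⬝ᵥ H *ᵥ y = y ⬝ᵥ H *ᵥ x := by
  conv_lhs => rw [← hH.eq, dotProduct_transpose_mulVec]

theorem sub_dotProduct_mulVec_sub_of_isSymm [CommRing R] (hH : H.IsSymm) (x y : ι → R) :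
    (x - y) ⬝ᵥ H *ᵥ (x - y) = x ⬝ᵥ H *ᵥ x - 2 * (x ⬝ᵥ H *ᵥ y) + y ⬝ᵥ H *ᵥ y := by
  rw [mulVec_sub, sub_dotProduct, dotProduct_sub, dotProduct_sub,
    dotProduct_mulVec_comm_of_isSymm hH y x]
  ring

end Symmetric

section QuadraticProgram

variable {n m : ℕ} {H : Matrix (Fin n) (Fin n) ℝ} {c : Fin n → ℝ}
  {A : Matrix (Fin m) (Fin n) ℝ} {xhat : Fin n → ℝ} {pihat : Fin m → ℝ}

theorem qObj_sub_dObj_of_stationary (hH : H.IsSymm)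
    (hstat : H *ᵥ xhat + c - Aᵀ *ᵥ pihat = 0) (b : Fin m → ℝ) (x : Fin n → ℝ) :
    qObj H c x - dObj H b xhat pihat =
      (1 / 2) * ((x - xhat) ⬝ᵥ H *ᵥ (x - xhat)) + pihat ⬝ᵥ (A *ᵥ x - b) := by
  have hc : c ⬝ᵥ x = pihat ⬝ᵥ A *ᵥ x - x ⬝ᵥ H *ᵥ xhat := by
    rw [eq_sub_of_add_eq' (sub_eq_zero.1 hstat), dotProduct_comm, dotProduct_sub,
      dotProduct_transpose_mulVec]
  rw [qObj, dObj, hc, sub_dotProduct_mulVec_sub_of_isSymm hH, dotProduct_sub, dotProduct_comm b]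
  ring

theorem dObj_le_qObj_add_dotProduct (hH : H.PosSemidef)
    (hstat : H *ᵥ xhat + c - Aᵀ *ᵥ pihat = 0) (hpi : 0 ≤ pihat)
    {b : Fin m → ℝ} {x : Fin n → ℝ} {z : Fin m → ℝ} (hfeas : b ≤ A *ᵥ x + z) :
    dObj H b xhat pihat ≤ qObj H c x + pihat ⬝ᵥ z := by
  have hgap := qObj_sub_dObj_of_stationary (isHermitian_iff_isSymm.1 hH.isHermitian) hstat b x
  have hquad : 0 ≤ (x - xhat) ⬝ᵥ H *ᵥ (x - xhat) := hH.dotProduct_mulVec_nonneg (x - xhat)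
  have hslack : 0 ≤ pihat ⬝ᵥ (A *ᵥ x - b) + pihat ⬝ᵥ z := by
    rw [← dotProduct_add, sub_add_eq_add_sub]
    exact dotProduct_nonneg_of_nonneg hpi (sub_nonneg.2 hfeas)
  linarith

end QuadraticProgram

/-- Lemma 3.2: bound on ‖z‖∞ for (P_φ)-feasible (x, z) when
φ > ‖π̂‖∞. -/
theorem relaxation_bound
    {n m : ℕ} (H : Matrix (Fin n) (Fin n) ℝ) (hH : H.PosSemidef)
    (c : Fin n → ℝ) (A : Matrix (Fin m) (Fin n) ℝ) (b : Fin m → ℝ)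
    (xhat : Fin n → ℝ) (pihat : Fin m → ℝ)
    (hdeq : H.mulVec xhat + c - Aᵀ.mulVec pihat = 0) (hdpos : 0 ≤ pihat)
    (x : Fin n → ℝ) (z : Fin m → ℝ)
    (hfeas : b ≤ A.mulVec x + z) (hz : 0 ≤ z)
    (φ : ℝ) (hφ : ‖pihat‖ < φ) :
    ‖z‖ ≤ (qObj H c x + φ * (∑ i, z i) - dObj H b xhat pihat) / (φ - ‖pihat‖) := by
  have hsum : ∑ i, ‖z i‖ = ∑ i, z i := Finset.sum_congr rfl fun i _ ↦ Real.norm_of_nonneg (hz i)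
  have hdual : dObj H b xhat pihat ≤ qObj H c x + pihat ⬝ᵥ z :=
    dObj_le_qObj_add_dotProduct hH hdeq hdpos hfeas
  have hholder : pihat ⬝ᵥ z ≤ ‖pihat‖ * ∑ i, z i :=
    hsum ▸ (Real.le_norm_self _).trans (norm_dotProduct_le_norm_mul_sum_norm pihat z)
  have hpos : 0 < φ - ‖pihat‖ := sub_pos.2 hφ
  rw [le_div_iff₀ hpos]
  calc ‖z‖ * (φ - ‖pihat‖)
      ≤ (∑ i, z i) * (φ - ‖pihat‖) := by
        gcongr
        exact hsum ▸ pi_norm_le_sum_norm z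
    _ = φ * (∑ i, z i) - ‖pihat‖ * ∑ i, z i := by ring
    _ ≤ qObj H c x + φ * (∑ i, z i) - dObj H b xhat pihat := by linarith
end

section
/- Let φ > 0 and suppose (x*, z*, y*, π*, ξ*, η*, ζ*) satisfies the optimality conditions of the penalized primal–dual pair with equality constraints: Hx* + c − Aᵀπ* − Cᵀ(η* − ζ*) = 0, π* + ξ* = φ·1, η* + ζ* = φ·1, s*ᵢπ*ᵢ = 0 and z*ᵢξ*ᵢ = 0 for all i, (t₊*)ⱼη*ⱼ = 0 and (t₋*)ⱼζ*ⱼ = 0 for all j, and s*, z*, t₊*, t₋*, π*, ξ*, η*, ζ* ≥ 0, where s* := Ax* + z* − b, t₊* := Cx* + y* − d, and t₋* := −Cx* + y* + d. If φ > max{‖π*‖∞, ‖η* − ζ*‖∞}, then z* = 0 and y* = 0; moreover Ax* ≥ b, Cx* = d, and x* is an optimal solution of (P). (Lemma 4.1.) -/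
open Matrix Filter

/-!
The bound on the multipliers forces `ξ`, `η` and `ζ` to be strictly positive: `ξ = φ - π`,
`2η = φ + (η - ζ)` and `2ζ = φ - (η - ζ)`. Complementarity then annihilates `z`, `t₊` and `t₋`,
and what remains of the optimality conditions is the KKT system of (P) with multipliers `π` and
`η - ζ`, which is sufficient for optimality because the objective is convex.
-/

theorem eq_zero_of_mul_eq_zero_of_pos {ι R : Type*} [MulZeroClass R] [NoZeroDivisors R]
    [Preorder R] {u v : ι → R} (huv : ∀ i, u i * v i = 0) (hv : ∀ i, 0 < v i) : u = 0 :=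
  funext fun i => (mul_eq_zero.mp (huv i)).resolve_right (hv i).ne'

section NormBounds

variable {ι : Type*} [Fintype ι] {u v : ι → ℝ} {r : ℝ}

theorem pos_right_of_add_eq_const_of_norm_lt (hsum : u + v = fun _ => r) (hu : ‖u‖ < r) (i : ι) :
    0 < v i := by
  have hsum_i : u i + v i = r := congrFun hsum i
  have hu_i : u i < r := (le_abs_self _).trans_lt ((norm_le_pi_norm u i).trans_lt hu)
  linarith

theorem pos_left_of_add_eq_const_of_norm_sub_lt (hsum : u + v = fun _ => r) (huv : ‖u - v‖ < r)
    (i : ι) : 0 < u i := by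
  have hsum' : (v - u) + (2 : ℝ) • u = fun _ => r := by rw [← hsum]; module
  have h2u : 0 < 2 * u i :=
    pos_right_of_add_eq_const_of_norm_lt hsum' (norm_sub_rev u v ▸ huv) i
  linarith

end NormBounds

section Objective

variable {n : ℕ} {H : Matrix (Fin n) (Fin n) ℝ}

theorem qObj_add (hH : H.IsSymm) (c x u : Fin n → ℝ) :
    qObj H c (x + u) = qObj H c x + (H *ᵥ x + c) ⬝ᵥ u + 1 / 2 * (u ⬝ᵥ H *ᵥ u) := by
  have hcross : x ⬝ᵥ H *ᵥ u = u ⬝ᵥ H *ᵥ x := by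
    rw [dotProduct_mulVec, ← mulVec_transpose, hH.eq, dotProduct_comm]
  simp only [qObj, mulVec_add, add_dotProduct, dotProduct_add, hcross,
    dotProduct_comm (H *ᵥ x) u]
  ring

theorem qObj_add_gradient_le (hH : H.PosSemidef) (c x y : Fin n → ℝ) :
    qObj H c x + (H *ᵥ x + c) ⬝ᵥ (y - x) ≤ qObj H c y := by
  have hsymm : H.IsSymm :=
    (conjTranspose_eq_transpose_of_trivial H).symm.trans hH.isHermitian
  have hcurv : 0 ≤ (y - x) ⬝ᵥ H *ᵥ (y - x) := by
    simpa using hH.dotProduct_mulVec_nonneg (y - x)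
  have htaylor := qObj_add hsymm c x (y - x)
  rw [add_sub_cancel] at htaylor
  linarith

end Objective

/-- The Karush–Kuhn–Tucker conditions for minimizing `qObj H c` subject to `b ≤ A *ᵥ x` and
`C *ᵥ x = d`, at the point `x` with multipliers `μ` for the inequalities and `ν` (of arbitrary
sign) for the equalities. -/
structure IsKKTPoint {n : ℕ} {ι κ : Type*} [Fintype ι] [Fintype κ]
    (H : Matrix (Fin n) (Fin n) ℝ) (c : Fin n → ℝ) (A : Matrix ι (Fin n) ℝ) (b : ι → ℝ)
    (C : Matrix κ (Fin n) ℝ) (d : κ → ℝ) (x : Fin n → ℝ) (μ : ι → ℝ) (ν : κ → ℝ) : Prop where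
  stationary : H *ᵥ x + c = Aᵀ *ᵥ μ + Cᵀ *ᵥ ν
  ineq_feasible : b ≤ A *ᵥ x
  eq_feasible : C *ᵥ x = d
  multiplier_nonneg : 0 ≤ μ
  complementary : ∀ i, (A *ᵥ x - b) i * μ i = 0

namespace IsKKTPoint

variable {n : ℕ} {ι κ : Type*} [Fintype ι] [Fintype κ] {H : Matrix (Fin n) (Fin n) ℝ}
  {c x y : Fin n → ℝ} {A : Matrix ι (Fin n) ℝ} {b μ : ι → ℝ} {C : Matrix κ (Fin n) ℝ}
  {d ν : κ → ℝ}

theorem gradient_dotProduct_sub (h : IsKKTPoint H c A b C d x μ ν) (hy : C *ᵥ y = d) :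
    (H *ᵥ x + c) ⬝ᵥ (y - x) = μ ⬝ᵥ (A *ᵥ y - b) := by
  have hμ : μ ⬝ᵥ (A *ᵥ x - b) = 0 :=
    Finset.sum_eq_zero fun i _ => (mul_comm _ _).trans (h.complementary i)
  calc (H *ᵥ x + c) ⬝ᵥ (y - x)
      = μ ⬝ᵥ (A *ᵥ y - A *ᵥ x) + ν ⬝ᵥ (C *ᵥ y - C *ᵥ x) := by
        rw [h.stationary, add_dotProduct, mulVec_transpose, mulVec_transpose,
          ← dotProduct_mulVec, ← dotProduct_mulVec, mulVec_sub, mulVec_sub]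
    _ = μ ⬝ᵥ (A *ᵥ y - A *ᵥ x) := by
        rw [hy, h.eq_feasible, sub_self, dotProduct_zero, add_zero]
    _ = μ ⬝ᵥ (A *ᵥ y - b) - μ ⬝ᵥ (A *ᵥ x - b) := by
        rw [← dotProduct_sub, sub_sub_sub_cancel_right]
    _ = μ ⬝ᵥ (A *ᵥ y - b) := by rw [hμ, sub_zero]

theorem qObj_le (h : IsKKTPoint H c A b C d x μ ν) (hH : H.PosSemidef) (hAy : b ≤ A *ᵥ y)
    (hCy : C *ᵥ y = d) : qObj H c x ≤ qObj H c y := by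
  have hslope : 0 ≤ (H *ᵥ x + c) ⬝ᵥ (y - x) := by
    rw [h.gradient_dotProduct_sub hCy]
    exact dotProduct_nonneg_of_nonneg h.multiplier_nonneg (sub_nonneg.mpr hAy)
  exact (le_add_of_nonneg_right hslope).trans (qObj_add_gradient_le hH c x y)

end IsKKTPoint

/-- Lemma 4.1: exactness of the ℓ1 penalty with equality
constraints. -/
theorem exact_penalty_with_equalities
    {n m p : ℕ} (H : Matrix (Fin n) (Fin n) ℝ) (hH : H.PosSemidef)
    (c : Fin n → ℝ) (A : Matrix (Fin m) (Fin n) ℝ) (b : Fin m → ℝ)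
    (C : Matrix (Fin p) (Fin n) ℝ) (d : Fin p → ℝ)
    (φ : ℝ) (hφ : 0 < φ)
    (xstar : Fin n → ℝ) (zstar pistar xistar : Fin m → ℝ)
    (ystar etastar zetastar : Fin p → ℝ)
    (hstat : H.mulVec xstar + c - Aᵀ.mulVec pistar
      - Cᵀ.mulVec (etastar - zetastar) = 0)
    (hsum1 : pistar + xistar = fun _ => φ)
    (hsum2 : etastar + zetastar = fun _ => φ)
    (hcomp1 : ∀ i, (A.mulVec xstar + zstar - b) i * pistar i = 0)
    (hcomp2 : ∀ i, zstar i * xistar i = 0)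
    (hcomp3 : ∀ j, (C.mulVec xstar + ystar - d) j * etastar j = 0)
    (hcomp4 : ∀ j, (-C.mulVec xstar + ystar + d) j * zetastar j = 0)
    (hs : 0 ≤ A.mulVec xstar + zstar - b) (hz : 0 ≤ zstar)
    (htp : 0 ≤ C.mulVec xstar + ystar - d)
    (htm : 0 ≤ -C.mulVec xstar + ystar + d)
    (hpi : 0 ≤ pistar) (hxi : 0 ≤ xistar)
    (heta : 0 ≤ etastar) (hzeta : 0 ≤ zetastar)
    (hbig : max ‖pistar‖ ‖etastar - zetastar‖ < φ) :
    zstar = 0 ∧ ystar = 0 ∧ b ≤ A.mulVec xstar ∧ C.mulVec xstar = d ∧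
      ∀ x : Fin n → ℝ, b ≤ A.mulVec x → C.mulVec x = d →
        qObj H c xstar ≤ qObj H c x := by
  obtain ⟨hpi_lt, hdiff_lt⟩ := max_lt_iff.mp hbig
  have hz0 : zstar = 0 := eq_zero_of_mul_eq_zero_of_pos hcomp2
    (pos_right_of_add_eq_const_of_norm_lt hsum1 hpi_lt)
  have htp0 : C *ᵥ xstar + ystar - d = 0 := eq_zero_of_mul_eq_zero_of_pos hcomp3
    (pos_left_of_add_eq_const_of_norm_sub_lt hsum2 hdiff_lt)
  have htm0 : -(C *ᵥ xstar) + ystar + d = 0 := eq_zero_of_mul_eq_zero_of_pos hcomp4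
    (pos_left_of_add_eq_const_of_norm_sub_lt ((add_comm _ _).trans hsum2)
      (norm_sub_rev etastar zetastar ▸ hdiff_lt))
  have hy0 : ystar = 0 := by linear_combination (norm := module) (1 / 2 : ℝ) • (htp0 + htm0)
  have hkkt : IsKKTPoint H c A b C d xstar pistar (etastar - zetastar) :=
    { stationary := by rwa [sub_sub, sub_eq_zero] at hstat
      ineq_feasible := by simpa [hz0] using hs
      eq_feasible := by simpa [hy0, sub_eq_zero] using htp0
      multiplier_nonneg := hpi
      complementary := by simpa only [hz0, add_zero] using hcomp1 }
  exact ⟨hz0, hy0, hkkt.ineq_feasible, hkkt.eq_feasible, fun _ hAx hCx => hkkt.qObj_le hH hAx hCx⟩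
end

section
/- Let (x̂, π̂, η̂, ζ̂) be dual-feasible, let (x, z, y) be feasible for the penalized problem (P̃_φ), and suppose φ > M, where M := max{‖π̂‖∞, 2‖η̂‖∞, 2‖ζ̂‖∞}. Then max{‖z‖∞, ‖y‖∞} ≤ (f(x) + φ·(1ᵀz + 1ᵀy) − ψ(x̂, π̂, η̂, ζ̂)) / ((1/2)·(φ − M)). (Lemma 4.3.) -/
open Matrix Filter

/-- The dual objective with equality constraints:
ψ(x̂, π̂, η̂, ζ̂) = −(1/2)x̂ᵀHx̂ + bᵀπ̂ + dᵀ(η̂ − ζ̂). -/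
noncomputable def dObjEq {n m p : ℕ} (H : Matrix (Fin n) (Fin n) ℝ)
    (b : Fin m → ℝ) (d : Fin p → ℝ) (xhat : Fin n → ℝ) (pihat : Fin m → ℝ)
    (etahat zetahat : Fin p → ℝ) : ℝ :=
  -(1 / 2) * (xhat ⬝ᵥ H.mulVec xhat) + b ⬝ᵥ pihat + d ⬝ᵥ (etahat - zetahat)

/-! Stationarity identifies the dual objective with the minimum over `x` of the Lagrangian
`f(x) + πᵀ(b - Ax) + νᵀ(d - Cx)`, where `ν = η - ζ` is the signed multiplier of `Cx = d`.
Feasibility says `b - Ax ≤ z` and `|d - Cx| ≤ y`, so by Hölder's inequality the multiplier terms are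
at most `M (1ᵀz + 1ᵀy)` as soon as `M` bounds `‖π‖∞` and `‖ν‖∞`; the factors 2 in the paper's `M`
come from `‖ν‖∞ ≤ ‖η‖∞ + ‖ζ‖∞`. What remains of the penalty is `(φ - M) (1ᵀz + 1ᵀy)`, which is
therefore at most the duality gap and which dominates `(φ - M) max{‖z‖∞, ‖y‖∞}`. -/

section Norms

theorem norm_sub_le_max_two_mul {E : Type*} [SeminormedAddGroup E] (a b : E) :
    ‖a - b‖ ≤ max (2 * ‖a‖) (2 * ‖b‖) :=
  calc ‖a - b‖ ≤ ‖a‖ + ‖b‖ := norm_sub_le a b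
    _ ≤ 2 * max ‖a‖ ‖b‖ := by linarith [le_max_left ‖a‖ ‖b‖, le_max_right ‖a‖ ‖b‖]
    _ = max (2 * ‖a‖) (2 * ‖b‖) := mul_max_of_nonneg _ _ zero_le_two

variable {ι κ : Type*} [Fintype ι] [Fintype κ]

theorem pi_norm_le_sum_of_nonneg {z : ι → ℝ} (hz : 0 ≤ z) : ‖z‖ ≤ ∑ i, z i := by
  refine (pi_norm_le_iff_of_nonneg (Finset.sum_nonneg fun i _ => hz i)).2 fun i => ?_
  rw [Real.norm_of_nonneg (hz i)]
  exact Finset.single_le_sum (fun k _ => hz k) (Finset.mem_univ i)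

theorem max_norm_le_sum_add_sum {z : ι → ℝ} {y : κ → ℝ} (hz : 0 ≤ z) (hy : 0 ≤ y) :
    max ‖z‖ ‖y‖ ≤ (∑ i, z i) + ∑ j, y j :=
  (max_le_add_of_nonneg (norm_nonneg z) (norm_nonneg y)).trans
    (add_le_add (pi_norm_le_sum_of_nonneg hz) (pi_norm_le_sum_of_nonneg hy))

theorem dotProduct_le_norm_mul_sum_of_abs_le (u : ι → ℝ) {v w : ι → ℝ} (h : |v| ≤ w) :
    u ⬝ᵥ v ≤ ‖u‖ * ∑ i, w i := by
  rw [dotProduct, Finset.mul_sum]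
  refine Finset.sum_le_sum fun i _ => ?_
  calc u i * v i ≤ |u i| * |v i| := (le_abs_self _).trans_eq (abs_mul _ _)
    _ ≤ ‖u‖ * w i := mul_le_mul (norm_le_pi_norm u i) (h i) (abs_nonneg _) (norm_nonneg u)

theorem dotProduct_le_norm_mul_sum_of_le {u v w : ι → ℝ} (hu : 0 ≤ u) (hw : 0 ≤ w) (h : v ≤ w) :
    u ⬝ᵥ v ≤ ‖u‖ * ∑ i, w i :=
  (dotProduct_le_dotProduct_of_nonneg_left h hu).trans
    (dotProduct_le_norm_mul_sum_of_abs_le u (abs_of_nonneg hw).le)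

end Norms

theorem le_div_half_mul_of_le_div {K : Type*} [Field K] [LinearOrder K] [IsStrictOrderedRing K]
    {a g t : K} (ha : 0 ≤ a) (ht : 0 < t) (h : a ≤ g / t) : a ≤ g / ((1 / 2) * t) :=
  calc a ≤ 2 * a := by linarith
    _ ≤ 2 * (g / t) := by gcongr
    _ = g / ((1 / 2) * t) := by field_simp

theorem two_mul_dotProduct_mulVec_le_of_posSemidef {ι : Type*} [Fintype ι] {H : Matrix ι ι ℝ}
    (hH : H.PosSemidef) (u v : ι → ℝ) :
    2 * (u ⬝ᵥ H *ᵥ v) ≤ u ⬝ᵥ H *ᵥ u + v ⬝ᵥ H *ᵥ v := by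
  have hsymm : v ⬝ᵥ H *ᵥ u = u ⬝ᵥ H *ᵥ v := by
    rw [← dotProduct_transpose_mulVec, ← conjTranspose_eq_transpose_of_trivial,
      hH.isHermitian.eq]
  have hnonneg : 0 ≤ (u - v) ⬝ᵥ H *ᵥ (u - v) := hH.dotProduct_mulVec_nonneg (u - v)
  simp only [mulVec_sub, sub_dotProduct, dotProduct_sub, hsymm] at hnonneg
  linarith

/-- The Lagrangian `f(x) + πᵀ(b - Ax) + νᵀ(d - Cx)` of the quadratic program with constraints
`Ax ≥ b` and `Cx = d`. The equality constraints carry a single multiplier `ν` of arbitrary sign,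
which is `η - ζ` when they are split into two inequalities with multipliers `η` and `ζ`. -/
noncomputable def lagrangian {n : ℕ} {ι κ : Type*} [Fintype ι] [Fintype κ]
    (H : Matrix (Fin n) (Fin n) ℝ) (c : Fin n → ℝ) (A : Matrix ι (Fin n) ℝ) (b : ι → ℝ)
    (C : Matrix κ (Fin n) ℝ) (d : κ → ℝ) (x : Fin n → ℝ) (π : ι → ℝ) (ν : κ → ℝ) : ℝ :=
  qObj H c x + π ⬝ᵥ (b - A *ᵥ x) + ν ⬝ᵥ (d - C *ᵥ x)

section Duality

variable {n : ℕ} {H : Matrix (Fin n) (Fin n) ℝ} {c : Fin n → ℝ}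

theorem qObj_add_dotProduct_gradient_le_qObj (hH : H.PosSemidef) (xhat x : Fin n → ℝ) :
    qObj H c xhat + (x - xhat) ⬝ᵥ (H *ᵥ xhat + c) ≤ qObj H c x := by
  simp only [qObj, sub_dotProduct, dotProduct_add, dotProduct_comm c]
  linarith [two_mul_dotProduct_mulVec_le_of_posSemidef hH x xhat]

theorem lagrangian_le_qObj_add_norm_mul_sum {ι κ : Type*} [Fintype ι] [Fintype κ]
    {A : Matrix ι (Fin n) ℝ} {b : ι → ℝ} {C : Matrix κ (Fin n) ℝ} {d : κ → ℝ}
    {x : Fin n → ℝ} {z π : ι → ℝ} {y : κ → ℝ} (ν : κ → ℝ)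
    (hπ : 0 ≤ π) (hz : 0 ≤ z) (hA : b ≤ A *ᵥ x + z) (hC : |d - C *ᵥ x| ≤ y) :
    lagrangian H c A b C d x π ν ≤ qObj H c x + ‖π‖ * ∑ i, z i + ‖ν‖ * ∑ j, y j := by
  unfold lagrangian
  gcongr
  · exact dotProduct_le_norm_mul_sum_of_le hπ hz (sub_le_iff_le_add'.2 hA)
  · exact dotProduct_le_norm_mul_sum_of_abs_le ν hC

theorem dObjEq_le_lagrangian {m p : ℕ} (hH : H.PosSemidef)
    {A : Matrix (Fin m) (Fin n) ℝ} (b : Fin m → ℝ) {C : Matrix (Fin p) (Fin n) ℝ} (d : Fin p → ℝ)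
    {xhat : Fin n → ℝ} {π : Fin m → ℝ} {η ζ : Fin p → ℝ}
    (hstat : H *ᵥ xhat + c - Aᵀ *ᵥ π - Cᵀ *ᵥ (η - ζ) = 0) (x : Fin n → ℝ) :
    dObjEq H b d xhat π η ζ ≤ lagrangian H c A b C d x π (η - ζ) := by
  have hgrad : H *ᵥ xhat + c = Aᵀ *ᵥ π + Cᵀ *ᵥ (η - ζ) := by
    rwa [sub_sub, sub_eq_zero] at hstat
  have hslope : x ⬝ᵥ (H *ᵥ xhat + c) = π ⬝ᵥ A *ᵥ x + (η - ζ) ⬝ᵥ C *ᵥ x := by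
    rw [hgrad, dotProduct_add, dotProduct_transpose_mulVec, dotProduct_transpose_mulVec]
  have hintercept : qObj H c xhat - xhat ⬝ᵥ (H *ᵥ xhat + c) =
      -(1 / 2) * (xhat ⬝ᵥ H *ᵥ xhat) := by
    rw [qObj, dotProduct_add, dotProduct_comm c]
    ring
  have htangent := qObj_add_dotProduct_gradient_le_qObj (c := c) hH xhat x
  rw [sub_dotProduct, hslope] at htangent
  rw [dObjEq, lagrangian, dotProduct_sub π, dotProduct_sub (η - ζ), dotProduct_comm b,
    dotProduct_comm d]
  linarith

end Duality

theorem relaxation_bound_with_equalities_general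
    {n m p : ℕ} {H : Matrix (Fin n) (Fin n) ℝ} (hH : H.PosSemidef)
    {c : Fin n → ℝ} {A : Matrix (Fin m) (Fin n) ℝ} {b : Fin m → ℝ}
    {C : Matrix (Fin p) (Fin n) ℝ} {d : Fin p → ℝ}
    {xhat : Fin n → ℝ} {pihat : Fin m → ℝ} {etahat zetahat : Fin p → ℝ}
    (hdeq : H *ᵥ xhat + c - Aᵀ *ᵥ pihat - Cᵀ *ᵥ (etahat - zetahat) = 0) (hpi : 0 ≤ pihat)
    {x : Fin n → ℝ} {z : Fin m → ℝ} {y : Fin p → ℝ}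
    (hfeas1 : b ≤ A *ᵥ x + z) (hz : 0 ≤ z) (hfeas2 : d ≤ C *ᵥ x + y) (hfeas3 : -d ≤ -(C *ᵥ x) + y)
    {φ M : ℝ} (hpiM : ‖pihat‖ ≤ M) (hnuM : ‖etahat - zetahat‖ ≤ M) (hφ : M < φ) :
    max ‖z‖ ‖y‖ ≤
      (qObj H c x + φ * ((∑ i, z i) + ∑ j, y j) - dObjEq H b d xhat pihat etahat zetahat) /
        (φ - M) := by
  have hres : |d - C *ᵥ x| ≤ y :=
    abs_le'.2 ⟨sub_le_iff_le_add'.2 hfeas2,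
      (neg_sub' _ _).trans_le (sub_le_iff_le_add'.2 hfeas3)⟩
  have hy : 0 ≤ y := (abs_nonneg _).trans hres
  have hdual : dObjEq H b d xhat pihat etahat zetahat ≤
      qObj H c x + M * ∑ i, z i + M * ∑ j, y j :=
    calc dObjEq H b d xhat pihat etahat zetahat
        ≤ lagrangian H c A b C d x pihat (etahat - zetahat) := dObjEq_le_lagrangian hH b d hdeq x
      _ ≤ qObj H c x + ‖pihat‖ * ∑ i, z i + ‖etahat - zetahat‖ * ∑ j, y j :=
        lagrangian_le_qObj_add_norm_mul_sum _ hpi hz hfeas1 hres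
      _ ≤ qObj H c x + M * ∑ i, z i + M * ∑ j, y j := by
        have hzsum : 0 ≤ ∑ i, z i := Finset.sum_nonneg fun i _ => hz i
        have hysum : 0 ≤ ∑ j, y j := Finset.sum_nonneg fun j _ => hy j
        gcongr
  rw [le_div_iff₀ (sub_pos.2 hφ)]
  calc max ‖z‖ ‖y‖ * (φ - M) ≤ ((∑ i, z i) + ∑ j, y j) * (φ - M) :=
        mul_le_mul_of_nonneg_right (max_norm_le_sum_add_sum hz hy) (sub_pos.2 hφ).le
    _ ≤ qObj H c x + φ * ((∑ i, z i) + ∑ j, y j) - dObjEq H b d xhat pihat etahat zetahat := by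
        linarith

/-- Lemma 4.3: bound on the relaxation variables with equality
constraints. -/
theorem relaxation_bound_with_equalities
    {n m p : ℕ} (H : Matrix (Fin n) (Fin n) ℝ) (hH : H.PosSemidef)
    (c : Fin n → ℝ) (A : Matrix (Fin m) (Fin n) ℝ) (b : Fin m → ℝ)
    (C : Matrix (Fin p) (Fin n) ℝ) (d : Fin p → ℝ)
    (xhat : Fin n → ℝ) (pihat : Fin m → ℝ) (etahat zetahat : Fin p → ℝ)
    (hdeq : H.mulVec xhat + c - Aᵀ.mulVec pihat
      - Cᵀ.mulVec (etahat - zetahat) = 0)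
    (hpi : 0 ≤ pihat) (heta : 0 ≤ etahat) (hzeta : 0 ≤ zetahat)
    (x : Fin n → ℝ) (z : Fin m → ℝ) (y : Fin p → ℝ)
    (hfeas1 : b ≤ A.mulVec x + z) (hz : 0 ≤ z)
    (hfeas2 : d ≤ C.mulVec x + y) (hfeas3 : -d ≤ -C.mulVec x + y)
    (φ : ℝ) (hφ : max ‖pihat‖ (max (2 * ‖etahat‖) (2 * ‖zetahat‖)) < φ) :
    max ‖z‖ ‖y‖ ≤
      (qObj H c x + φ * ((∑ i, z i) + ∑ j, y j)
        - dObjEq H b d xhat pihat etahat zetahat) /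
      ((1 / 2) * (φ - max ‖pihat‖ (max (2 * ‖etahat‖) (2 * ‖zetahat‖)))) := by
  refine le_div_half_mul_of_le_div (le_max_of_le_left (norm_nonneg z)) (sub_pos.2 hφ) ?_
  exact relaxation_bound_with_equalities_general hH hdeq hpi hfeas1 hz hfeas2 hfeas3
    (le_max_left _ _) ((norm_sub_le_max_two_mul etahat zetahat).trans (le_max_right _ _)) hφ
end

section
/- Assume: (a) the only x ∈ ℝ^n with Hx = 0, Ax = 0, and Cx = 0 is x = 0; and (b) there exist x̂ ∈ ℝ^n, π̂ ∈ ℝ^m, η̂, ζ̂ ∈ ℝ^p with Ax̂ ≥ b, Cx̂ = d, Hx̂ + c = Aᵀπ̂ + Cᵀ(η̂ − ζ̂), π̂ > 0 componentwise, and η̂, ζ̂ ≥ 0. Let sequences (x^k) ⊂ ℝ^n, (z^k), (π^k), (ξ^k) ⊂ ℝ^m, (y^k), (η^k), (ζ^k) ⊂ ℝ^p and scalars φ_k > 0 satisfy, for all k: z^k ≥ 0, s^k := Ax^k + z^k − b ≥ 0, t₊^k := Cx^k + y^k − d ≥ 0, t₋^k := −Cx^k + y^k + d ≥ 0, and π^k,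 ξ^k, η^k, ζ^k ≥ 0. Suppose φ_k → ∞, the sequence ((z^k, y^k)) is bounded, and K ⊆ ℕ is an infinite index set such that for k ∈ K the sequences (s^k ∘ π^k), (z^k ∘ ξ^k), (t₊^k ∘ η^k), (t₋^k ∘ ζ^k), (Hx^k + c − Aᵀπ^k − Cᵀ(η^k − ζ^k)), (π^k + ξ^k − φ_k·1), (η^k + ζ^k − φ_k·1), and ((Hx^k + c − Aᵀπ^k − Cᵀ(η^k − ζ^k))ᵀx^k) are all bounded. Then (z^k, y^k) → (0, 0) along K, and the subsequence (x^k)_{k∈K} is bounded. (Lemma 4.5.) -/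
open Matrix Filter

/-!
Let `w = x - x̂`, `ŝ = Ax̂ - b`, let `r` be the stationarity residual at `(x, π, η - ζ)` and let
`σ = 1ᵀz + 1ᵀy` be the total infeasibility. Since the residual at `(x̂, π̂, η̂ - ζ̂)` vanishes,
`rᵀw` is `wᵀHw` minus the pairings of the multiplier differences with `Aw` and `Cw`. Expanding
these pairings through the complementarity products gives
`wᵀHw + π̂ᵀs + πᵀŝ + φσ = O(1 + σ)`, where every term on the left is nonnegative. As `φ → ∞`, this
forces `σ → 0`, and then `wᵀHw` and, because `π̂ > 0`, also `s` are bounded. Hence `Hx`, `Ax` and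
`Cx` are bounded, and so is `x` because the three kernels meet only in `0`.
-/

open Asymptotics

section BigO

variable {ι : Type*} {l : Filter ι}

lemma isBigO_cofinite_inf_principal_one_iff {E : Type*} [SeminormedAddCommGroup E] {K : Set ι}
    {f : ι → E} :
    f =O[cofinite ⊓ 𝓟 K] (fun _ => (1 : ℝ)) ↔ ∃ M : ℝ, ∀ k ∈ K, ‖f k‖ ≤ M := by
  rw [← subtype_coe_map_comap, Subtype.val_injective.comap_cofinite_eq, isBigO_map,
    ← isBigO_norm_left, isBigO_cofinite_iff (by simp)]
  simp

lemma isBigO_and_isBigO_of_nonneg_of_add {E : Type*} [Norm E] {u v : ι → ℝ} {g : ι → E}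
    (hu : ∀ᶠ k in l, 0 ≤ u k) (hv : ∀ᶠ k in l, 0 ≤ v k)
    (h : (fun k => u k + v k) =O[l] g) : u =O[l] g ∧ v =O[l] g := by
  have hle : ∀ᶠ k in l, ‖u k‖ ≤ ‖u k + v k‖ ∧ ‖v k‖ ≤ ‖u k + v k‖ := by
    filter_upwards [hu, hv] with k huk hvk
    rw [Real.norm_of_nonneg huk, Real.norm_of_nonneg hvk, Real.norm_of_nonneg (add_nonneg huk hvk)]
    exact ⟨le_add_of_nonneg_right hvk, le_add_of_nonneg_left huk⟩
  exact ⟨(IsBigO.of_bound' (hle.mono fun k hk => hk.1)).trans h,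
    (IsBigO.of_bound' (hle.mono fun k hk => hk.2)).trans h⟩

lemma isLittleO_one_add_of_mul_isBigO {φ σ : ι → ℝ} (hφ : Tendsto φ l atTop)
    (h : (fun k => φ k * σ k) =O[l] fun k => 1 + σ k) : σ =o[l] fun k => 1 + σ k := by
  have hinv : (fun k => (φ k)⁻¹) =o[l] fun _ => (1 : ℝ) :=
    (isLittleO_one_iff ℝ).2 hφ.inv_tendsto_atTop
  refine (hinv.mul_isBigO h).congr' ?_ (.of_forall fun k => one_mul _)
  filter_upwards [hφ.eventually_ne_atTop 0] with k hk
  exact inv_mul_cancel_left₀ hk _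

lemma tendsto_zero_and_isBigO_one_of_penalty {Q φ σ : ι → ℝ} (hφ : Tendsto φ l atTop)
    (hQ : ∀ᶠ k in l, 0 ≤ Q k) (hσ : ∀ᶠ k in l, 0 ≤ σ k)
    (h : (fun k => Q k + φ k * σ k) =O[l] fun k => 1 + σ k) :
    Tendsto σ l (nhds 0) ∧ Q =O[l] fun _ => (1 : ℝ) := by
  have hφσ : ∀ᶠ k in l, 0 ≤ φ k * σ k := by
    filter_upwards [hφ.eventually_ge_atTop 0, hσ] with k using mul_nonneg
  have hlittle : σ =o[l] fun k => 1 + σ k :=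
    isLittleO_one_add_of_mul_isBigO hφ (isBigO_and_isBigO_of_nonneg_of_add hQ hφσ h).2
  have hone : (fun k => 1 + σ k) =O[l] fun _ => (1 : ℝ) := by
    simpa only [add_sub_cancel_right] using hlittle.right_isBigO_sub
  exact ⟨(isLittleO_one_iff ℝ).1 (hlittle.trans_isBigO hone),
    (isBigO_and_isBigO_of_nonneg_of_add hQ hφσ (h.trans hone)).1⟩

end BigO

lemma abs_sub_le_of_nonneg {G : Type*} [Lattice G] [AddCommGroup G] [IsOrderedAddMonoid G]
    {u v d : G} (hp : 0 ≤ u + v - d) (hm : 0 ≤ -u + v + d) : |u - d| ≤ v := by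
  refine abs_le'.2 ⟨sub_nonneg.1 (hm.trans_eq ?_), sub_nonneg.1 (hp.trans_eq ?_)⟩ <;> abel

section Vectors

variable {ι n m : Type*} [Fintype n] [Fintype m] {l : Filter ι}

lemma isBigO_dotProduct {f g : ι → n → ℝ} {u v : ι → ℝ} (hf : f =O[l] u) (hg : g =O[l] v) :
    (fun k => f k ⬝ᵥ g k) =O[l] fun k => u k * v k :=
  .fun_sum fun i _ => (isBigO_pi.1 hf i).mul (isBigO_pi.1 hg i)

lemma isBigO_dotProduct_of_mul {f g : ι → n → ℝ} {u : ι → ℝ}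
    (h : (fun k => f k * g k) =O[l] u) : (fun k => f k ⬝ᵥ g k) =O[l] u :=
  .fun_sum fun i _ => isBigO_pi.1 h i

lemma isBigO_dotProduct_of_pos {a : n → ℝ} (ha : ∀ i, 0 < a i) {v : ι → n → ℝ}
    (hv : ∀ᶠ k in l, 0 ≤ v k) : v =O[l] fun k => a ⬝ᵥ v k := by
  refine isBigO_pi.2 fun i => .of_bound (a i)⁻¹ ?_
  filter_upwards [hv] with k hk
  have hterm : a i * v k i ≤ a ⬝ᵥ v k :=
    Finset.single_le_sum (f := fun i => a i * v k i)
      (fun j _ => mul_nonneg (ha j).le (hk j)) (Finset.mem_univ i)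
  rw [Real.norm_of_nonneg (hk i), le_inv_mul_iff₀ (ha i)]
  exact hterm.trans (le_abs_self _)

lemma eventually_dotProduct_nonneg {u v : ι → n → ℝ} (hu : ∀ᶠ k in l, 0 ≤ u k)
    (hv : ∀ᶠ k in l, 0 ≤ v k) : ∀ᶠ k in l, 0 ≤ u k ⬝ᵥ v k := by
  filter_upwards [hu, hv] with k using dotProduct_nonneg_of_nonneg

lemma eventually_one_dotProduct_nonneg {v : ι → n → ℝ} (hv : ∀ᶠ k in l, 0 ≤ v k) :
    ∀ᶠ k in l, 0 ≤ 1 ⬝ᵥ v k :=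
  eventually_dotProduct_nonneg (.of_forall fun _ => zero_le_one) hv

lemma isBigO_one_dotProduct_add {u : ι → n → ℝ} {v : ι → m → ℝ}
    (hu : ∀ᶠ k in l, 0 ≤ u k) (hv : ∀ᶠ k in l, 0 ≤ v k) :
    (u =O[l] fun k => 1 ⬝ᵥ u k + 1 ⬝ᵥ v k) ∧ v =O[l] fun k => 1 ⬝ᵥ u k + 1 ⬝ᵥ v k := by
  obtain ⟨hu_le, hv_le⟩ := isBigO_and_isBigO_of_nonneg_of_add
    (eventually_one_dotProduct_nonneg hu) (eventually_one_dotProduct_nonneg hv) (isBigO_refl _ l)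
  exact ⟨(isBigO_dotProduct_of_pos (fun _ => zero_lt_one) hu).trans hu_le,
    (isBigO_dotProduct_of_pos (fun _ => zero_lt_one) hv).trans hv_le⟩

lemma eventually_one_dotProduct_add_nonneg {u : ι → n → ℝ} {v : ι → m → ℝ}
    (hu : ∀ᶠ k in l, 0 ≤ u k) (hv : ∀ᶠ k in l, 0 ≤ v k) :
    ∀ᶠ k in l, 0 ≤ 1 ⬝ᵥ u k + 1 ⬝ᵥ v k := by
  filter_upwards [eventually_one_dotProduct_nonneg hu, eventually_one_dotProduct_nonneg hv] with k
    using add_nonneg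

lemma isBigO_one_add_one_dotProduct_add {u : ι → n → ℝ} {v : ι → m → ℝ}
    (hu : ∀ᶠ k in l, 0 ≤ u k) (hv : ∀ᶠ k in l, 0 ≤ v k) :
    ((fun _ => (1 : ℝ)) =O[l] fun k => 1 + (1 ⬝ᵥ u k + 1 ⬝ᵥ v k)) ∧
      (u =O[l] fun k => 1 + (1 ⬝ᵥ u k + 1 ⬝ᵥ v k)) ∧
      v =O[l] fun k => 1 + (1 ⬝ᵥ u k + 1 ⬝ᵥ v k) := by
  obtain ⟨hone, hsum⟩ := isBigO_and_isBigO_of_nonneg_of_add (.of_forall fun _ => zero_le_one)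
    (eventually_one_dotProduct_add_nonneg hu hv) (isBigO_refl _ l)
  obtain ⟨hu_le, hv_le⟩ := isBigO_one_dotProduct_add hu hv
  exact ⟨hone, hu_le.trans hsum, hv_le.trans hsum⟩

lemma tendsto_zero_and_isBigO_one_of_one_dotProduct_penalty {Q φ : ι → ℝ} {u : ι → n → ℝ}
    {v : ι → m → ℝ} (hφ : Tendsto φ l atTop) (hQ : ∀ᶠ k in l, 0 ≤ Q k)
    (hu : ∀ᶠ k in l, 0 ≤ u k) (hv : ∀ᶠ k in l, 0 ≤ v k)
    (h : (fun k => Q k + φ k * (1 ⬝ᵥ u k + 1 ⬝ᵥ v k)) =O[l]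
      fun k => 1 + (1 ⬝ᵥ u k + 1 ⬝ᵥ v k)) :
    Tendsto u l (nhds 0) ∧ Tendsto v l (nhds 0) ∧ Q =O[l] fun _ => (1 : ℝ) := by
  obtain ⟨hsum, hQ_bdd⟩ := tendsto_zero_and_isBigO_one_of_penalty hφ hQ
    (eventually_one_dotProduct_add_nonneg hu hv) h
  obtain ⟨hu_le, hv_le⟩ := isBigO_one_dotProduct_add hu hv
  exact ⟨hu_le.trans_tendsto hsum, hv_le.trans_tendsto hsum, hQ_bdd⟩

lemma isBigO_of_abs_le {u v : ι → n → ℝ} (h : ∀ᶠ k in l, |u k| ≤ v k) : u =O[l] v :=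
  isBigO_pi.2 fun i => (IsBigO.of_bound' (by
    filter_upwards [h] with k hk
    exact (hk i).trans (le_abs_self _))).trans (isBigO_pi.1 (isBigO_refl v l) i)

open scoped MatrixOrder Matrix.Norms.L2Operator in
lemma isBigO_mulVec_of_dotProduct_mulVec_isBigO_sq {H : Matrix n n ℝ} (hH : H.PosSemidef)
    {w : ι → n → ℝ} {g : ι → ℝ} (h : (fun k => w k ⬝ᵥ H *ᵥ w k) =O[l] fun k => g k ^ 2) :
    (fun k => H *ᵥ w k) =O[l] g := by
  classical
  obtain ⟨B, rfl⟩ := CStarAlgebra.nonneg_iff_eq_star_mul_self.mp hH.nonneg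
  have hform (v : n → ℝ) : v ⬝ᵥ (star B * B) *ᵥ v = (B *ᵥ v) ⬝ᵥ (B *ᵥ v) := by
    rw [← mulVec_mulVec, dotProduct_mulVec, star_eq_conjTranspose,
      conjTranspose_eq_transpose_of_trivial, vecMul_transpose]
  have hBw : (fun k => B *ᵥ w k) =O[l] g := by
    refine isBigO_pi.2 fun i => .of_pow two_ne_zero
      (IsBigO.trans (.of_bound' (.of_forall fun k => ?_)) h)
    have hterm : (B *ᵥ w k) i * (B *ᵥ w k) i ≤ (B *ᵥ w k) ⬝ᵥ (B *ᵥ w k) :=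
      Finset.single_le_sum (f := fun i => (B *ᵥ w k) i * (B *ᵥ w k) i)
        (fun j _ => mul_self_nonneg _) (Finset.mem_univ i)
    simp only [Pi.pow_apply, norm_pow, Real.norm_eq_abs, sq_abs]
    rw [hform, sq]
    exact hterm.trans (le_abs_self _)
  have hstar : (fun k => star B *ᵥ (B *ᵥ w k)) =O[l] fun k => B *ᵥ w k :=
    (star B).mulVecLin.toContinuousLinearMap.isBigO_comp _ l
  simpa only [mulVec_mulVec] using hstar.trans hBw

lemma isBigO_comp_of_ker_eq_bot {E F : Type*} [NormedAddCommGroup E] [NormedSpace ℝ E]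
    [FiniteDimensional ℝ E] [NormedAddCommGroup F] [NormedSpace ℝ F] {f : E →ₗ[ℝ] F}
    (hf : LinearMap.ker f = ⊥) (w : ι → E) : w =O[l] fun k => f (w k) := by
  obtain ⟨κ, -, hκ⟩ := f.exists_antilipschitzWith hf
  exact .of_bound κ (.of_forall fun k => by simpa using hκ.le_mul_dist (w k) 0)

end Vectors

section KKT

variable {n m p : Type*} [Fintype n] [Fintype m] [Fintype p]

/-- The gradient in `x` of the Lagrangian of `min ½ xᵀHx + cᵀx` subject to `Ax ≥ b`, `Cx = d`, with
multiplier `π` for the inequalities and `ν` for the equations. -/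
def stationarityResidual {R : Type*} [CommRing R] (H : Matrix n n R) (c : n → R) (A : Matrix m n R)
    (C : Matrix p n R) (x : n → R) (π : m → R) (ν : p → R) : n → R :=
  H *ᵥ x + c - Aᵀ *ᵥ π - Cᵀ *ᵥ ν

lemma stationarityResidual_dotProduct_sub {R : Type*} [CommRing R] {H : Matrix n n R} {c : n → R}
    {A : Matrix m n R} {C : Matrix p n R} {x₀ : n → R} {π₀ : m → R} {ν₀ : p → R}
    (h : stationarityResidual H c A C x₀ π₀ ν₀ = 0) (x : n → R) (π : m → R) (ν : p → R) :
    stationarityResidual H c A C x π ν ⬝ᵥ (x - x₀) =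
      (x - x₀) ⬝ᵥ H *ᵥ (x - x₀) - (π - π₀) ⬝ᵥ A *ᵥ (x - x₀) - (ν - ν₀) ⬝ᵥ C *ᵥ (x - x₀) := by
  have hdiff : stationarityResidual H c A C x π ν =
      H *ᵥ (x - x₀) - Aᵀ *ᵥ (π - π₀) - Cᵀ *ᵥ (ν - ν₀) := by
    rw [← sub_zero (stationarityResidual H c A C x π ν), ← h]
    simp only [stationarityResidual, mulVec_sub]
    abel
  rw [hdiff, sub_dotProduct, sub_dotProduct, mulVec_transpose, mulVec_transpose,
    ← dotProduct_mulVec, ← dotProduct_mulVec, dotProduct_comm]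

variable {ι : Type*} {l : Filter ι} {φ g : ι → ℝ}

lemma inequality_penalty_isBigO {s z π ξ : ι → m → ℝ} (s₀ π₀ : m → ℝ)
    (hg : (fun _ => (1 : ℝ)) =O[l] g) (hz : z =O[l] g)
    (hsπ : (fun k => s k * π k) =O[l] fun _ => (1 : ℝ))
    (hzξ : (fun k => z k * ξ k) =O[l] fun _ => (1 : ℝ))
    (hπξφ : (fun k => π k + ξ k - fun _ => φ k) =O[l] fun _ => (1 : ℝ)) :
    (fun k => π₀ ⬝ᵥ s k + π k ⬝ᵥ s₀ + φ k * (1 ⬝ᵥ z k) + (π k - π₀) ⬝ᵥ (s k - z k - s₀))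
      =O[l] g := by
  have hexpand (k : ι) : π₀ ⬝ᵥ s k + π k ⬝ᵥ s₀ + φ k * (1 ⬝ᵥ z k)
      + (π k - π₀) ⬝ᵥ (s k - z k - s₀) =
      (s k ⬝ᵥ π k + z k ⬝ᵥ ξ k + π₀ ⬝ᵥ s₀) + (π₀ - (π k + ξ k - fun _ => φ k)) ⬝ᵥ z k := by
    simp only [dotProduct, Finset.mul_sum, ← Finset.sum_add_distrib]
    refine Finset.sum_congr rfl fun i _ => ?_
    simp only [Pi.sub_apply, Pi.add_apply, Pi.one_apply]
    ring
  have hbounded : (fun k => s k ⬝ᵥ π k + z k ⬝ᵥ ξ k + π₀ ⬝ᵥ s₀) =O[l] fun _ => (1 : ℝ) :=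
    ((isBigO_dotProduct_of_mul hsπ).add (isBigO_dotProduct_of_mul hzξ)).add
      (isBigO_const_one ℝ _ l)
  have hlinear : (fun k => (π₀ - (π k + ξ k - fun _ => φ k)) ⬝ᵥ z k) =O[l] g := by
    simpa only [one_mul] using isBigO_dotProduct ((isBigO_const_one ℝ π₀ l).sub hπξφ) hz
  simpa only [hexpand] using (hbounded.trans hg).add hlinear

lemma equality_penalty_isBigO {q y η ζ : ι → p → ℝ} (ν₀ : p → ℝ)
    (hg : (fun _ => (1 : ℝ)) =O[l] g) (hq : q =O[l] g) (hy : y =O[l] g)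
    (hη : (fun k => (q k + y k) * η k) =O[l] fun _ => (1 : ℝ))
    (hζ : (fun k => (-q k + y k) * ζ k) =O[l] fun _ => (1 : ℝ))
    (hηζφ : (fun k => η k + ζ k - fun _ => φ k) =O[l] fun _ => (1 : ℝ)) :
    (fun k => φ k * (1 ⬝ᵥ y k) + (η k - ζ k - ν₀) ⬝ᵥ q k) =O[l] g := by
  have hexpand (k : ι) : φ k * (1 ⬝ᵥ y k) + (η k - ζ k - ν₀) ⬝ᵥ q k =
      ((q k + y k) ⬝ᵥ η k + (-q k + y k) ⬝ᵥ ζ k)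
        - ((η k + ζ k - fun _ => φ k) ⬝ᵥ y k + ν₀ ⬝ᵥ q k) := by
    simp only [dotProduct, Finset.mul_sum, ← Finset.sum_add_distrib, ← Finset.sum_sub_distrib]
    refine Finset.sum_congr rfl fun i _ => ?_
    simp only [Pi.sub_apply, Pi.add_apply, Pi.one_apply, Pi.neg_apply]
    ring
  have hbounded : (fun k => (q k + y k) ⬝ᵥ η k + (-q k + y k) ⬝ᵥ ζ k) =O[l] fun _ => (1 : ℝ) :=
    (isBigO_dotProduct_of_mul hη).add (isBigO_dotProduct_of_mul hζ)
  have hlinear : (fun k => (η k + ζ k - fun _ => φ k) ⬝ᵥ y k + ν₀ ⬝ᵥ q k) =O[l] g := by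
    simpa only [one_mul] using
      (isBigO_dotProduct hηζφ hy).add (isBigO_dotProduct (isBigO_const_one ℝ ν₀ l) hq)
  simpa only [hexpand] using (hbounded.trans hg).sub hlinear

lemma penalized_gap_isBigO {H : Matrix n n ℝ} {c : n → ℝ} {A : Matrix m n ℝ} {b : m → ℝ}
    {C : Matrix p n ℝ} {d : p → ℝ} {x₀ : n → ℝ} {π₀ : m → ℝ} {ν₀ : p → ℝ} (heq : C *ᵥ x₀ = d)
    (hstat : stationarityResidual H c A C x₀ π₀ ν₀ = 0)
    {x : ι → n → ℝ} {z π ξ : ι → m → ℝ} {y η ζ : ι → p → ℝ}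
    (hg : (fun _ => (1 : ℝ)) =O[l] g) (hz : z =O[l] g)
    (hq : (fun k => C *ᵥ x k - d) =O[l] g) (hy : y =O[l] g)
    (hsπ : (fun k => (A *ᵥ x k + z k - b) * π k) =O[l] fun _ => (1 : ℝ))
    (hzξ : (fun k => z k * ξ k) =O[l] fun _ => (1 : ℝ))
    (htη : (fun k => (C *ᵥ x k + y k - d) * η k) =O[l] fun _ => (1 : ℝ))
    (htζ : (fun k => (-(C *ᵥ x k) + y k + d) * ζ k) =O[l] fun _ => (1 : ℝ))
    (hr : (fun k => stationarityResidual H c A C (x k) (π k) (η k - ζ k)) =O[l] fun _ => (1 : ℝ))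
    (hπξφ : (fun k => π k + ξ k - fun _ => φ k) =O[l] fun _ => (1 : ℝ))
    (hηζφ : (fun k => η k + ζ k - fun _ => φ k) =O[l] fun _ => (1 : ℝ))
    (hrx : (fun k => stationarityResidual H c A C (x k) (π k) (η k - ζ k) ⬝ᵥ x k) =O[l]
      fun _ => (1 : ℝ)) :
    (fun k => (x k - x₀) ⬝ᵥ H *ᵥ (x k - x₀)
        + (π₀ ⬝ᵥ (A *ᵥ x k + z k - b) + π k ⬝ᵥ (A *ᵥ x₀ - b))
        + φ k * (1 ⬝ᵥ z k + 1 ⬝ᵥ y k)) =O[l] g := by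
  have hineq := inequality_penalty_isBigO (A *ᵥ x₀ - b) π₀ hg hz hsπ hzξ hπξφ
  have heqn := equality_penalty_isBigO ν₀ hg hq hy (by simpa only [sub_add_eq_add_sub] using htη)
    (htζ.congr_left fun k => by congr 1; abel) hηζφ
  have hrw : (fun k => stationarityResidual H c A C (x k) (π k) (η k - ζ k) ⬝ᵥ (x k - x₀)) =O[l]
      fun _ => (1 : ℝ) := by
    simpa only [dotProduct_sub, one_mul] using
      hrx.sub (by simpa only [one_mul] using isBigO_dotProduct hr (isBigO_const_one ℝ x₀ l))
  refine (((hrw.trans hg).add hineq).add heqn).congr_left fun k => ?_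
  have hAw : A *ᵥ (x k - x₀) = A *ᵥ x k + z k - b - z k - (A *ᵥ x₀ - b) := by
    rw [mulVec_sub]
    abel
  rw [stationarityResidual_dotProduct_sub hstat, hAw, mulVec_sub C, heq]
  ring

lemma isBigO_one_of_mulVec_isBigO_one {H : Matrix n n ℝ} (hH : H.PosSemidef) {A : Matrix m n ℝ}
    {C : Matrix p n ℝ} (hker : ∀ x : n → ℝ, H *ᵥ x = 0 → A *ᵥ x = 0 → C *ᵥ x = 0 → x = 0)
    {x : ι → n → ℝ} {x₀ : n → ℝ}
    (hH_bdd : (fun k => (x k - x₀) ⬝ᵥ H *ᵥ (x k - x₀)) =O[l] fun _ => (1 : ℝ))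
    (hA_bdd : (fun k => A *ᵥ x k) =O[l] fun _ => (1 : ℝ))
    (hC_bdd : (fun k => C *ᵥ x k) =O[l] fun _ => (1 : ℝ)) : x =O[l] fun _ => (1 : ℝ) := by
  let f := H.mulVecLin.prod (A.mulVecLin.prod C.mulVecLin)
  have hf : LinearMap.ker f = ⊥ := by
    refine LinearMap.ker_eq_bot'.2 fun v hv => ?_
    obtain ⟨hHv, hAv, hCv⟩ : H *ᵥ v = 0 ∧ A *ᵥ v = 0 ∧ C *ᵥ v = 0 := by simpa [f] using hv
    exact hker v hHv hAv hCv
  have hHw : (fun k => H *ᵥ (x k - x₀)) =O[l] fun _ => (1 : ℝ) :=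
    isBigO_mulVec_of_dotProduct_mulVec_isBigO_sq hH (by simpa only [one_pow] using hH_bdd)
  have hHx : (fun k => H *ᵥ x k) =O[l] fun _ => (1 : ℝ) := by
    simpa only [mulVec_sub, sub_add_cancel] using hHw.add (isBigO_const_one ℝ (H *ᵥ x₀) l)
  exact (isBigO_comp_of_ker_eq_bot hf x).trans (hHx.prod_left (hA_bdd.prod_left hC_bdd))

theorem z_y_to_zero_x_bounded_with_equalities_general
    {H : Matrix n n ℝ} (hH : H.PosSemidef) {c : n → ℝ} {A : Matrix m n ℝ} {b : m → ℝ}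
    {C : Matrix p n ℝ} {d : p → ℝ}
    (hker : ∀ x : n → ℝ, H *ᵥ x = 0 → A *ᵥ x = 0 → C *ᵥ x = 0 → x = 0)
    {x₀ : n → ℝ} {π₀ : m → ℝ} {ν₀ : p → ℝ} (hfeas : b ≤ A *ᵥ x₀) (heq : C *ᵥ x₀ = d)
    (hstat : stationarityResidual H c A C x₀ π₀ ν₀ = 0) (hπ₀ : ∀ i, 0 < π₀ i)
    {x : ι → n → ℝ} {z π ξ : ι → m → ℝ} {y η ζ : ι → p → ℝ}
    (hz : ∀ᶠ k in l, 0 ≤ z k) (hs : ∀ᶠ k in l, 0 ≤ A *ᵥ x k + z k - b)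
    (htp : ∀ᶠ k in l, 0 ≤ C *ᵥ x k + y k - d) (htm : ∀ᶠ k in l, 0 ≤ -(C *ᵥ x k) + y k + d)
    (hπ : ∀ᶠ k in l, 0 ≤ π k) (hφ : Tendsto φ l atTop)
    (hsπ : (fun k => (A *ᵥ x k + z k - b) * π k) =O[l] fun _ => (1 : ℝ))
    (hzξ : (fun k => z k * ξ k) =O[l] fun _ => (1 : ℝ))
    (htη : (fun k => (C *ᵥ x k + y k - d) * η k) =O[l] fun _ => (1 : ℝ))
    (htζ : (fun k => (-(C *ᵥ x k) + y k + d) * ζ k) =O[l] fun _ => (1 : ℝ))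
    (hr : (fun k => stationarityResidual H c A C (x k) (π k) (η k - ζ k)) =O[l] fun _ => (1 : ℝ))
    (hπξφ : (fun k => π k + ξ k - fun _ => φ k) =O[l] fun _ => (1 : ℝ))
    (hηζφ : (fun k => η k + ζ k - fun _ => φ k) =O[l] fun _ => (1 : ℝ))
    (hrx : (fun k => stationarityResidual H c A C (x k) (π k) (η k - ζ k) ⬝ᵥ x k) =O[l]
      fun _ => (1 : ℝ)) :
    Tendsto z l (nhds 0) ∧ Tendsto y l (nhds 0) ∧ x =O[l] fun _ => (1 : ℝ) := by
  have hy : ∀ᶠ k in l, |C *ᵥ x k - d| ≤ y k := by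
    filter_upwards [htp, htm] with k using abs_sub_le_of_nonneg
  have hy_nonneg : ∀ᶠ k in l, 0 ≤ y k := hy.mono fun k hk => (abs_nonneg _).trans hk
  obtain ⟨hone, hz_le, hy_le⟩ := isBigO_one_add_one_dotProduct_add hz hy_nonneg
  have hgap := penalized_gap_isBigO heq hstat hone hz_le ((isBigO_of_abs_le hy).trans hy_le) hy_le
    hsπ hzξ htη htζ hr hπξφ hηζφ hrx
  have hHw : ∀ᶠ k in l, 0 ≤ (x k - x₀) ⬝ᵥ H *ᵥ (x k - x₀) := .of_forall fun k => by
    simpa only [star_trivial] using hH.dotProduct_mulVec_nonneg (x k - x₀)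
  have hπ₀s : ∀ᶠ k in l, 0 ≤ π₀ ⬝ᵥ (A *ᵥ x k + z k - b) :=
    eventually_dotProduct_nonneg (.of_forall fun _ i => (hπ₀ i).le) hs
  have hπs₀ : ∀ᶠ k in l, 0 ≤ π k ⬝ᵥ (A *ᵥ x₀ - b) :=
    eventually_dotProduct_nonneg hπ (.of_forall fun _ => sub_nonneg.2 hfeas)
  have hcompl := hπ₀s.and hπs₀ |>.mono fun k hk => add_nonneg hk.1 hk.2
  obtain ⟨hz₀, hy₀, hgap_bdd⟩ := tendsto_zero_and_isBigO_one_of_one_dotProduct_penalty hφ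
    (hHw.and hcompl |>.mono fun k hk => add_nonneg hk.1 hk.2) hz hy_nonneg hgap
  obtain ⟨hH_bdd, hcompl_bdd⟩ := isBigO_and_isBigO_of_nonneg_of_add hHw hcompl hgap_bdd
  have hs_bdd : (fun k => A *ᵥ x k + z k - b) =O[l] fun _ => (1 : ℝ) :=
    (isBigO_dotProduct_of_pos hπ₀ hs).trans
      (isBigO_and_isBigO_of_nonneg_of_add hπ₀s hπs₀ hcompl_bdd).1
  have hA_bdd : (fun k => A *ᵥ x k) =O[l] fun _ => (1 : ℝ) :=
    ((hs_bdd.sub (hz₀.isBigO_one ℝ)).add (isBigO_const_one ℝ b l)).congr_left fun k => by abel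
  have hC_bdd : (fun k => C *ᵥ x k) =O[l] fun _ => (1 : ℝ) := by
    simpa only [sub_add_cancel] using
      ((isBigO_of_abs_le hy).trans (hy₀.isBigO_one ℝ)).add (isBigO_const_one ℝ d l)
  exact ⟨hz₀, hy₀, isBigO_one_of_mulVec_isBigO_one hH hker hH_bdd hA_bdd hC_bdd⟩

end KKT

/-- Lemma 4.5: (z^k, y^k) → 0 along K and (x^k)_{k∈K} is
bounded, in the presence of equality constraints. -/
theorem z_y_to_zero_x_bounded_with_equalities
    {n m p : ℕ} (H : Matrix (Fin n) (Fin n) ℝ) (hH : H.PosSemidef)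
    (c : Fin n → ℝ) (A : Matrix (Fin m) (Fin n) ℝ) (b : Fin m → ℝ)
    (C : Matrix (Fin p) (Fin n) ℝ) (d : Fin p → ℝ)
    (hker : ∀ x : Fin n → ℝ, H.mulVec x = 0 → A.mulVec x = 0 →
      C.mulVec x = 0 → x = 0)
    (xhat : Fin n → ℝ) (pihat : Fin m → ℝ) (etahat zetahat : Fin p → ℝ)
    (hfeas : b ≤ A.mulVec xhat) (heq : C.mulVec xhat = d)
    (hdeq : H.mulVec xhat + c = Aᵀ.mulVec pihat + Cᵀ.mulVec (etahat - zetahat))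
    (hdpos : ∀ i, 0 < pihat i) (heta : 0 ≤ etahat) (hzeta : 0 ≤ zetahat)
    (x : ℕ → Fin n → ℝ) (z π ξ : ℕ → Fin m → ℝ) (y η ζ : ℕ → Fin p → ℝ)
    (φ : ℕ → ℝ) (hφpos : ∀ k, 0 < φ k)
    (hz : ∀ k, 0 ≤ z k) (hs : ∀ k, 0 ≤ A.mulVec (x k) + z k - b)
    (htp : ∀ k, 0 ≤ C.mulVec (x k) + y k - d)
    (htm : ∀ k, 0 ≤ -C.mulVec (x k) + y k + d)
    (hπ : ∀ k, 0 ≤ π k) (hξ : ∀ k, 0 ≤ ξ k)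
    (hη : ∀ k, 0 ≤ η k) (hζ : ∀ k, 0 ≤ ζ k)
    (hφ : Tendsto φ atTop atTop)
    (hzybd : ∃ M : ℝ, ∀ k, max ‖z k‖ ‖y k‖ ≤ M)
    (K : Set ℕ) (hK : K.Infinite)
    (hbd1 : ∃ M : ℝ, ∀ k ∈ K, ‖(A.mulVec (x k) + z k - b) * π k‖ ≤ M)
    (hbd2 : ∃ M : ℝ, ∀ k ∈ K, ‖z k * ξ k‖ ≤ M)
    (hbd3 : ∃ M : ℝ, ∀ k ∈ K, ‖(C.mulVec (x k) + y k - d) * η k‖ ≤ M)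
    (hbd4 : ∃ M : ℝ, ∀ k ∈ K, ‖(-C.mulVec (x k) + y k + d) * ζ k‖ ≤ M)
    (hbd5 : ∃ M : ℝ, ∀ k ∈ K, ‖H.mulVec (x k) + c - Aᵀ.mulVec (π k)
      - Cᵀ.mulVec (η k - ζ k)‖ ≤ M)
    (hbd6 : ∃ M : ℝ, ∀ k ∈ K, ‖π k + ξ k - fun _ => φ k‖ ≤ M)
    (hbd7 : ∃ M : ℝ, ∀ k ∈ K, ‖η k + ζ k - fun _ => φ k‖ ≤ M)
    (hbd8 : ∃ M : ℝ, ∀ k ∈ K,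
      |(H.mulVec (x k) + c - Aᵀ.mulVec (π k) - Cᵀ.mulVec (η k - ζ k)) ⬝ᵥ x k| ≤ M) :
    Tendsto (fun k => z k) (atTop ⊓ Filter.principal K) (nhds 0) ∧
    Tendsto (fun k => y k) (atTop ⊓ Filter.principal K) (nhds 0) ∧
    ∃ M : ℝ, ∀ k ∈ K, ‖x k‖ ≤ M := by
  rw [← Nat.cofinite_eq_atTop] at hφ ⊢
  have hstat : stationarityResidual H c A C xhat pihat (etahat - zetahat) = 0 := by
    rw [stationarityResidual, sub_sub, hdeq, sub_self]
  obtain ⟨hz₀, hy₀, hx⟩ := z_y_to_zero_x_bounded_with_equalities_general hH hker hfeas heq hstat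
    hdpos (.of_forall hz) (.of_forall hs) (.of_forall htp) (.of_forall htm) (.of_forall hπ)
    (hφ.mono_left inf_le_left) (isBigO_cofinite_inf_principal_one_iff.2 hbd1)
    (isBigO_cofinite_inf_principal_one_iff.2 hbd2) (isBigO_cofinite_inf_principal_one_iff.2 hbd3)
    (isBigO_cofinite_inf_principal_one_iff.2 hbd4) (isBigO_cofinite_inf_principal_one_iff.2 hbd5)
    (isBigO_cofinite_inf_principal_one_iff.2 hbd6) (isBigO_cofinite_inf_principal_one_iff.2 hbd7)
    (isBigO_cofinite_inf_principal_one_iff.2 hbd8)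
  exact ⟨hz₀, hy₀, isBigO_cofinite_inf_principal_one_iff.1 hx⟩
end
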